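/- Let n ≥ 3 and let v : ℝ^n → ℝ^n be defined by the components v_1 = 0, v_{j+1} = Σ_{i=1}^{j} x_i x_n^{j-i} for j = 1,…,n-2, and v_n = -1. Let H be the n×n real symmetric matrix with entries H_{j,k} = ∂²Φ/∂x_j∂x_k where Φ(x_1,…,x_n) = Σ_{0<j<j+k≤n} x_j x_k x_n^{n-j-k}. Then H·v = 0 at every point (x_1,…,x_n) ∈ ℝ^n. -/

import Mathlib

/-!
Number the coordinates from `0` and put `A(X) = ∑ xᵢ Xⁱ`, `t = xₙ₋₁`, `P = A / (1 - tX)`.  Then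
`Φ` is the coefficient of `X ^ (n - 2)` in `A² / (1 - tX)`, and `dΦ` is the coefficient of
`X ^ (n - 2)` in `2 P dA + X P² dt`.  Thus `∇Φ` depends on `x` only through the coefficients `Pₘ`
of `P` with `m ≤ n - 2`.  These obey Horner's recursion `P₀ = x₀`, `Pₘ₊₁ = xₘ₊₁ + t Pₘ`, while the
entries of `v` are `v₀ = 0`, `vₘ₊₁ = Pₘ` for `m + 1 ≤ n - 2`, and `vₙ₋₁ = -1`, so that by induction
`dPₘ₊₁(v) = Pₘ - Pₘ + t dPₘ(v) = 0`.  Hence `∇Φ` is stationary in the direction `v`.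
-/

open scoped BigOperators

/-- Hessian matrix of a function on `ℝⁿ` with respect to the standard basis. -/
noncomputable def hess {n : ℕ} (Φ : (Fin n → ℝ) → ℝ) (x : Fin n → ℝ) :
    Matrix (Fin n) (Fin n) ℝ :=
  fun j k => fderiv ℝ (fun y => fderiv ℝ Φ y (Pi.single k 1)) x (Pi.single j 1)

open Finset

section Algebra

variable {R : Type*}

/-- The partial values of Horner's scheme for the coefficient sequence `b` at the point `t`,
i.e. the coefficients of the power series `(∑ bᵢ Xⁱ) / (1 - tX)`. -/
def hornerPartial [CommSemiring R] (b : ℕ → R) (t : R) : ℕ → R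
  | 0 => b 0
  | m + 1 => b (m + 1) + t * hornerPartial b t m

/-- The quadratic form in `b` given by the coefficient of `X ^ N` in the power series
`(∑ bᵢ Xⁱ)² / (1 - tX)`. -/
def hornerForm [CommSemiring R] (b : ℕ → R) (t : R) (N : ℕ) : R :=
  ∑ p ∈ antidiagonal N, b p.1 * hornerPartial b t p.2

lemma hornerPartial_eq_sum_range [CommSemiring R] (b : ℕ → R) (t : R) (m : ℕ) :
    hornerPartial b t m = ∑ i ∈ range (m + 1), b i * t ^ (m - i) := by
  induction m with
  | zero => simp [hornerPartial]
  | succ m ih =>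
    rw [hornerPartial, ih, sum_range_succ _ (m + 1), mul_sum, add_comm]
    congr 1
    · refine sum_congr rfl fun i hi => ?_
      rw [Nat.succ_sub (mem_range_succ_iff.mp hi), pow_succ']
      ring
    · simp

-- With `P = A / (1 - tX)` this reads `A² / (1 - tX) = (1 - tX) P²`.
lemma hornerForm_succ [CommRing R] (b : ℕ → R) (t : R) (M : ℕ) :
    hornerForm b t (M + 1) =
      ∑ p ∈ antidiagonal (M + 1), hornerPartial b t p.1 * hornerPartial b t p.2 -
        t * ∑ p ∈ antidiagonal M, hornerPartial b t p.1 * hornerPartial b t p.2 := by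
  simp only [hornerForm, Nat.sum_antidiagonal_succ, hornerPartial, add_mul, sum_add_distrib,
    mul_sum, mul_assoc]
  ring

lemma sum_fin_ite_le_eq_sum_range {S : Type*} [AddCommMonoid S] {n m : ℕ} (hm : m < n)
    (f : ℕ → S) :
    ∑ i : Fin n, (if (i : ℕ) ≤ m then f i else 0) = ∑ i ∈ range (m + 1), f i := by
  rw [← sum_range fun i => if i ≤ m then f i else 0, ← sum_filter]
  congr 1
  ext i
  simp only [mem_filter, mem_range]
  omega

lemma hornerPartial_ofNat_eq_sum_fin [CommSemiring R] {n m : ℕ} [NeZero n] (hm : m < n)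
    (x : Fin n → R) (t : R) :
    hornerPartial (fun i => x (Fin.ofNat n i)) t m =
      ∑ i : Fin n, if (i : ℕ) ≤ m then x i * t ^ (m - i) else 0 := by
  rw [hornerPartial_eq_sum_range, ← sum_fin_ite_le_eq_sum_range hm]
  simp only [Fin.ofNat_val_eq_self]

lemma hornerForm_ofNat_eq_sum_fin [CommSemiring R] {n N : ℕ} [NeZero n] (hN : N < n)
    (x : Fin n → R) (t : R) :
    hornerForm (fun i => x (Fin.ofNat n i)) t N =
      ∑ j : Fin n, ∑ k : Fin n,
        if (j : ℕ) + k ≤ N then x j * x k * t ^ (N - j - k) else 0 := by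
  rw [hornerForm, Nat.sum_antidiagonal_eq_sum_range_succ_mk, ← sum_fin_ite_le_eq_sum_range hN]
  refine sum_congr rfl fun j _ => ?_
  rw [Fin.ofNat_val_eq_self, hornerPartial_ofNat_eq_sum_fin (by omega : N - j < n), mul_sum]
  split_ifs with hj
  · refine sum_congr rfl fun k _ => ?_
    simp only [Nat.le_sub_iff_add_le' hj, mul_ite, mul_zero, mul_assoc]
  · exact (sum_eq_zero fun k _ => if_neg (by omega)).symm

end Algebra

section Calculus

variable {𝕜 E 𝔸 : Type*} [NontriviallyNormedField 𝕜] [NormedAddCommGroup E] [NormedSpace 𝕜 E]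
  [NormedCommRing 𝔸] [NormedAlgebra 𝕜 𝔸]

lemma contDiff_hornerPartial (a : ℕ → E →L[𝕜] 𝔸) (τ : E →L[𝕜] 𝔸) (k : WithTop ℕ∞) (m : ℕ) :
    ContDiff 𝕜 k fun y => hornerPartial (fun i => a i y) (τ y) m := by
  induction m with
  | zero => exact (a 0).contDiff
  | succ m ih => exact (a (m + 1)).contDiff.add (τ.contDiff.mul ih)

lemma contDiff_hornerForm (a : ℕ → E →L[𝕜] 𝔸) (τ : E →L[𝕜] 𝔸) (k : WithTop ℕ∞) (N : ℕ) :
    ContDiff 𝕜 k fun y => hornerForm (fun i => a i y) (τ y) N :=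
  ContDiff.sum fun p _ => (a p.1).contDiff.mul (contDiff_hornerPartial a τ k p.2)

lemma differentiable_hornerPartial (a : ℕ → E →L[𝕜] 𝔸) (τ : E →L[𝕜] 𝔸) (m : ℕ) :
    Differentiable 𝕜 fun y => hornerPartial (fun i => a i y) (τ y) m :=
  (contDiff_hornerPartial a τ 1 m).differentiable one_ne_zero

lemma fderiv_hornerPartial_zero (a : ℕ → E →L[𝕜] 𝔸) (τ : E →L[𝕜] 𝔸) (x : E) :
    fderiv 𝕜 (fun y => hornerPartial (fun i => a i y) (τ y) 0) x = a 0 :=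
  (a 0).fderiv

lemma fderiv_hornerPartial_succ_apply (a : ℕ → E →L[𝕜] 𝔸) (τ : E →L[𝕜] 𝔸) (m : ℕ) (x e : E) :
    fderiv 𝕜 (fun y => hornerPartial (fun i => a i y) (τ y) (m + 1)) x e =
      a (m + 1) e + (τ x * fderiv 𝕜 (fun y => hornerPartial (fun i => a i y) (τ y) m) x e +
        hornerPartial (fun i => a i x) (τ x) m * τ e) :=
  congrArg (· e) ((a (m + 1)).hasFDerivAt.add
    (τ.hasFDerivAt.mul (differentiable_hornerPartial a τ m x).hasFDerivAt)).fderiv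

lemma fderiv_hornerPartial_apply_eq_zero {a : ℕ → E →L[𝕜] 𝔸} {τ : E →L[𝕜] 𝔸} {N : ℕ} {x w : E}
    (h_zero : a 0 w = 0)
    (h_succ : ∀ m < N, a (m + 1) w = hornerPartial (fun i => a i x) (τ x) m)
    (hτ : τ w = -1) {m : ℕ} (hm : m ≤ N) :
    fderiv 𝕜 (fun y => hornerPartial (fun i => a i y) (τ y) m) x w = 0 := by
  induction m with
  | zero => rw [fderiv_hornerPartial_zero, h_zero]
  | succ m ih =>
    rw [fderiv_hornerPartial_succ_apply, h_succ m hm, ih (Nat.le_of_succ_le hm), hτ]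
    ring

lemma fderiv_sum_antidiagonal_mul_self_apply {f : ℕ → E → 𝔸} {x : E}
    (hf : ∀ m, DifferentiableAt 𝕜 (f m) x) (N : ℕ) (e : E) :
    fderiv 𝕜 (fun y => ∑ p ∈ antidiagonal N, f p.1 y * f p.2 y) x e =
      2 * ∑ p ∈ antidiagonal N, f p.2 x * fderiv 𝕜 (f p.1) x e := by
  have h_swap : ∑ p ∈ antidiagonal N, f p.1 x * fderiv 𝕜 (f p.2) x e =
      ∑ p ∈ antidiagonal N, f p.2 x * fderiv 𝕜 (f p.1) x e :=
    Nat.sum_antidiagonal_swap (f := fun p => f p.2 x * fderiv 𝕜 (f p.1) x e)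
  rw [fderiv_fun_sum fun p _ => (hf p.1).fun_mul (hf p.2)]
  simp only [fderiv_fun_mul (hf _) (hf _), _root_.sum_apply, add_apply, smul_apply,
    smul_eq_mul, sum_add_distrib, h_swap, two_mul]

-- In power series form: `d(A² / (1 - tX)) = 2 P dA + X P² dt` with `P = A / (1 - tX)`.
lemma fderiv_hornerForm_succ_apply (a : ℕ → E →L[𝕜] 𝔸) (τ : E →L[𝕜] 𝔸) (M : ℕ) (x e : E) :
    fderiv 𝕜 (fun y => hornerForm (fun i => a i y) (τ y) (M + 1)) x e =
      2 * ∑ p ∈ antidiagonal (M + 1), hornerPartial (fun i => a i x) (τ x) p.2 * a p.1 e +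
        (∑ p ∈ antidiagonal M, hornerPartial (fun i => a i x) (τ x) p.1 *
          hornerPartial (fun i => a i x) (τ x) p.2) * τ e := by
  let P (m : ℕ) (y : E) : 𝔸 := hornerPartial (fun i => a i y) (τ y) m
  have hP (m : ℕ) : Differentiable 𝕜 (P m) := differentiable_hornerPartial a τ m
  have h_sq (N : ℕ) := fderiv_sum_antidiagonal_mul_self_apply (hP · x) N e
  have h_diff (N : ℕ) : DifferentiableAt 𝕜 (fun y => ∑ p ∈ antidiagonal N, P p.1 y * P p.2 y) x :=
    DifferentiableAt.fun_sum fun p _ => (hP p.1 x).fun_mul (hP p.2 x)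
  have h_recursion : ∑ p ∈ antidiagonal M, P p.2 x * fderiv 𝕜 (P (p.1 + 1)) x e =
      ∑ p ∈ antidiagonal M, P p.2 x * a (p.1 + 1) e +
        τ x * ∑ p ∈ antidiagonal M, P p.2 x * fderiv 𝕜 (P p.1) x e +
        (∑ p ∈ antidiagonal M, P p.1 x * P p.2 x) * τ e := by
    rw [mul_sum, sum_mul, ← sum_add_distrib, ← sum_add_distrib]
    refine sum_congr rfl fun p _ => ?_
    simp only [P, fderiv_hornerPartial_succ_apply]
    ring
  calc
    _ = fderiv 𝕜 (fun y => ∑ p ∈ antidiagonal (M + 1), P p.1 y * P p.2 y -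
          τ y * ∑ p ∈ antidiagonal M, P p.1 y * P p.2 y) x e := by
      simp only [hornerForm_succ, P]
    _ = 2 * ∑ p ∈ antidiagonal (M + 1), P p.2 x * fderiv 𝕜 (P p.1) x e -
          (τ x * (2 * ∑ p ∈ antidiagonal M, P p.2 x * fderiv 𝕜 (P p.1) x e) +
            (∑ p ∈ antidiagonal M, P p.1 x * P p.2 x) * τ e) := by
      rw [fderiv_fun_sub (h_diff _) (τ.differentiableAt.fun_mul (h_diff _)),
        fderiv_fun_mul τ.differentiableAt (h_diff _), τ.fderiv]
      simp only [sub_apply, add_apply, smul_apply, smul_eq_mul, h_sq]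
    _ = _ := by
      rw [Nat.sum_antidiagonal_succ, Nat.sum_antidiagonal_succ, h_recursion,
        fderiv_hornerPartial_zero]
      ring

theorem fderiv_fderiv_hornerForm_succ_apply_eq_zero {a : ℕ → E →L[𝕜] 𝔸} {τ : E →L[𝕜] 𝔸} {M : ℕ}
    {x w : E} (h_zero : a 0 w = 0)
    (h_succ : ∀ m < M + 1, a (m + 1) w = hornerPartial (fun i => a i x) (τ x) m)
    (hτ : τ w = -1) (e : E) :
    fderiv 𝕜 (fun y => fderiv 𝕜 (fun z => hornerForm (fun i => a i z) (τ z) (M + 1)) y e) x w =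
      0 := by
  let P (m : ℕ) (y : E) : 𝔸 := hornerPartial (fun i => a i y) (τ y) m
  have hP (m : ℕ) : DifferentiableAt 𝕜 (P m) x := differentiable_hornerPartial a τ m x
  have hPw {m : ℕ} (hm : m ≤ M + 1) : fderiv 𝕜 (P m) x w = 0 :=
    fderiv_hornerPartial_apply_eq_zero h_zero h_succ hτ hm
  have h_linear_diff : DifferentiableAt 𝕜 (fun y => ∑ p ∈ antidiagonal (M + 1),
      P p.2 y * a p.1 e) x :=
    DifferentiableAt.fun_sum fun p _ => (hP p.2).mul_const (a p.1 e)
  have h_sq_diff : DifferentiableAt 𝕜 (fun y => ∑ p ∈ antidiagonal M, P p.1 y * P p.2 y) x :=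
    DifferentiableAt.fun_sum fun p _ => (hP p.1).fun_mul (hP p.2)
  have h_linear : fderiv 𝕜 (fun y => ∑ p ∈ antidiagonal (M + 1), P p.2 y * a p.1 e) x w = 0 := by
    rw [fderiv_fun_sum fun p _ => (hP p.2).mul_const (a p.1 e), _root_.sum_apply]
    refine sum_eq_zero fun p hp => ?_
    rw [fderiv_mul_const (hP p.2), smul_apply, hPw (HasAntidiagonal.antidiagonal.snd_le hp),
      smul_zero]
  have h_sq : fderiv 𝕜 (fun y => ∑ p ∈ antidiagonal M, P p.1 y * P p.2 y) x w = 0 := by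
    rw [fderiv_sum_antidiagonal_mul_self_apply hP, sum_eq_zero fun p hp => ?_, mul_zero]
    rw [hPw (Nat.le_succ_of_le (HasAntidiagonal.antidiagonal.fst_le hp)), mul_zero]
  simp only [fderiv_hornerForm_succ_apply]
  rw [fderiv_fun_add (h_linear_diff.const_mul 2) (h_sq_diff.mul_const (τ e)),
    fderiv_const_mul h_linear_diff, fderiv_mul_const h_sq_diff]
  simp only [add_apply, smul_apply, h_linear, h_sq, smul_zero, add_zero]

end Calculus

lemma hess_mulVec_apply {n : ℕ} {Φ : (Fin n → ℝ) → ℝ} {x : Fin n → ℝ} (hΦ : ContDiffAt ℝ 2 Φ x)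
    (w : Fin n → ℝ) (j : Fin n) :
    (hess Φ x).mulVec w j = fderiv ℝ (fun y => fderiv ℝ Φ y (Pi.single j 1)) x w := by
  have h_diff : DifferentiableAt ℝ (fderiv ℝ Φ) x :=
    (hΦ.fderiv_right (m := 1) le_rfl).differentiableAt one_ne_zero
  have h_apply (e u : Fin n → ℝ) :
      fderiv ℝ (fun y => fderiv ℝ Φ y e) x u = fderiv ℝ (fderiv ℝ Φ) x u e := by
    simp [fderiv_clm_apply h_diff (differentiableAt_const e)]
  have h_symm : IsSymmSndFDerivAt ℝ Φ x := hΦ.isSymmSndFDerivAt (by simp)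
  have h_expand : w = ∑ k, w k • Pi.single k (1 : ℝ) := by
    simp only [← Pi.single_smul, smul_eq_mul, mul_one, univ_sum_single]
  rw [h_apply, h_symm w, h_expand, map_sum, ← h_expand]
  simp only [Matrix.mulVec, dotProduct, hess, h_apply, map_smul, smul_eq_mul, mul_comm]

/-- The Hessian of `Φ(x) = Σ_{0<j<j+k≤n} x_j x_k x_n^{n-j-k}` annihilates the
explicit kernel vector `v` (with `v_1 = 0`, `v_{j+1} = Σ_{i=1}^{j} x_i x_n^{j-i}`,
`v_n = -1`) at every point of `ℝⁿ`.  Indices are 0-based in the formalization: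
coordinate `i : Fin n` is `x_{i+1}`. -/
theorem hessian_mulVec_kernel_eq_zero (n : ℕ) (hn : 3 ≤ n)
    (Φ : (Fin n → ℝ) → ℝ)
    (hΦ : Φ = fun x => ∑ j : Fin n, ∑ k : Fin n,
      if (j : ℕ) + (k : ℕ) + 2 ≤ n then
        x j * x k * (x ⟨n - 1, by omega⟩) ^ (n - 2 - (j : ℕ) - (k : ℕ)) else 0)
    (v : (Fin n → ℝ) → Fin n → ℝ)
    (hv : v = fun (x : Fin n → ℝ) (p : Fin n) =>
      if (p : ℕ) = 0 then 0
      else if (p : ℕ) = n - 1 then -1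
      else ∑ i : Fin n, if (i : ℕ) < (p : ℕ) then
        x i * (x ⟨n - 1, by omega⟩) ^ ((p : ℕ) - 1 - (i : ℕ)) else 0) :
    ∀ x : Fin n → ℝ, (hess Φ x).mulVec (v x) = 0 := by
  intro x
  obtain ⟨M, rfl⟩ : ∃ M, n = M + 3 := ⟨n - 3, by omega⟩
  let a (i : ℕ) : (Fin (M + 3) → ℝ) →L[ℝ] ℝ := .proj (Fin.ofNat (M + 3) i)
  let τ : (Fin (M + 3) → ℝ) →L[ℝ] ℝ := .proj ⟨M + 2, by omega⟩
  have hΦ_form : Φ = fun y => hornerForm (fun i => a i y) (τ y) (M + 1) := by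
    funext y
    simp only [hΦ, Nat.reduceLeDiff]
    exact (hornerForm_ofNat_eq_sum_fin (by omega) y (τ y)).symm
  have hv_zero : a 0 (v x) = 0 := by simp [a, hv]
  have hv_succ (m : ℕ) (hm : m < M + 1) :
      a (m + 1) (v x) = hornerPartial (fun i => a i x) (τ x) m := by
    have h_index : Fin.ofNat (M + 3) (m + 1) = ⟨m + 1, by omega⟩ :=
      Fin.ext (Nat.mod_eq_of_lt (by omega))
    have h_ne_last : m + 1 ≠ M + 3 - 1 := by omega
    simp only [a, ContinuousLinearMap.proj_apply, h_index, hv, m.succ_ne_zero, h_ne_last, if_false,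
      Nat.lt_succ_iff]
    exact (hornerPartial_ofNat_eq_sum_fin (by omega) x (τ x)).symm
  have hv_last : τ (v x) = -1 := by simp [τ, hv]
  ext j
  rw [hΦ_form, hess_mulVec_apply (contDiff_hornerForm a τ 2 (M + 1)).contDiffAt]
  exact fderiv_fderiv_hornerForm_succ_apply_eq_zero hv_zero hv_succ hv_last (Pi.single j 1)
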